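/- Let q ≥ 2 be an even integer, λ > 0, and let {f_n^{(i)} : n, i ∈ ℕ} be a bi-indexed family of symmetric functions in L²(ℝ₊^q) such that for all i, j ∈ ℕ: ⟨f_n^{(i)}, f_n^{(j)}⟩ → λ and ‖f_n^{(i)} ⌢_{q/2} f_n^{(j)} − f_n^{(j)}‖ → 0 as n → ∞. Then for every integer m ≥ 2, every function χ : {1,…,m} → ℕ, and every tuple (r₁,…,r_{m−1}) ∈ D_m, the scalar iterated contraction (⋯((f_n^{(χ(1))} ⌢_{r₁} f_n^{(χ(2))}) ⌢_{r₂} f_n^{(χ(3))})⋯) ⌢_{r_{m−1}} f_n^{(χ(m))} converges, as n → ∞, to λ^j, where j is the number of indices p with r_p = q. -/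

import Mathlib

open MeasureTheory Filter Topology

noncomputable section

/-- The positive orthant `ℝ₊ⁿ` inside `ℝⁿ`. -/
def posOrthant (n : ℕ) : Set (Fin n → ℝ) := {x | ∀ i, 0 ≤ x i}

/-- Lebesgue measure restricted to the positive orthant; the measure underlying `L²(ℝ₊ⁿ)`. -/
def μpos (n : ℕ) : MeasureTheory.Measure (Fin n → ℝ) :=
  MeasureTheory.volume.restrict (posOrthant n)

/-- Total extension of a finite tuple, giving the junk value `0` out of range. -/
def pad {k : ℕ} (t : Fin k → ℝ) (i : ℕ) : ℝ := if h : i < k then t ⟨i, h⟩ else 0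

/-- The `L²` inner product `⟨f, g⟩ = ∫ f ⬝ conj g` over the positive orthant. -/
def L2inner (n : ℕ) (f g : (Fin n → ℝ) → ℂ) : ℂ :=
  ∫ x, f x * (starRingEnd ℂ) (g x) ∂(μpos n)

/-- The `L²` norm over the positive orthant. -/
def L2norm (n : ℕ) (f : (Fin n → ℝ) → ℂ) : ℝ :=
  Real.sqrt (∫ x, ‖f x‖ ^ 2 ∂(μpos n))

/-- The adjoint `f*(t₁,…,tₙ) = conj (f (tₙ,…,t₁))`. -/
def adjF (n : ℕ) (f : (Fin n → ℝ) → ℂ) : (Fin n → ℝ) → ℂ :=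
  fun t => (starRingEnd ℂ) (f fun i => t i.rev)

/-- `f` is symmetric when `f = f*` a.e. on the positive orthant. -/
def IsSymmFn (n : ℕ) (f : (Fin n → ℝ) → ℂ) : Prop :=
  ∀ᵐ t ∂(μpos n), f t = adjF n f t

/-- Reindexing a multivariate function along an equality of dimensions. -/
def reindex {a b : ℕ} (h : a = b) (F : (Fin a → ℝ) → ℂ) : (Fin b → ℝ) → ℂ :=
  fun t => F fun j => t (Fin.cast h j)

/-- The integrand (in the `s`-variables) of the `p`-th arc contraction
`(f ⌢_p g)(t₁,…,t_{m+n-2p}) = ∫ f(t₁,…,t_{m-p},s_p,…,s₁) g(s₁,…,s_p,t_{m-p+1},…,t_{m+n-2p}) ds`. -/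
def arcKer (m n p : ℕ) (f : (Fin m → ℝ) → ℂ) (g : (Fin n → ℝ) → ℂ)
    (t : Fin (m + n - 2 * p) → ℝ) (s : Fin p → ℝ) : ℂ :=
  f (fun j => if (j : ℕ) < m - p then pad t j else pad s (m - 1 - (j : ℕ))) *
  g (fun j => if (j : ℕ) < p then pad s j else pad t (m + (j : ℕ) - 2 * p))

/-- The `p`-th arc contraction `f ⌢_p g`. -/
def arc (m n p : ℕ) (f : (Fin m → ℝ) → ℂ) (g : (Fin n → ℝ) → ℂ) :
    (Fin (m + n - 2 * p) → ℝ) → ℂ :=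
  fun t => ∫ s in posOrthant p, arcKer m n p f g t s

/-- The integrand of the star contraction of index `(p, p-1)`:
`(f ⋆_p^{p-1} g)(t₁,…,t_{m+n-2p+1})
  = ∫ f(t₁,…,t_{m-p},t_{m-p+1},s_{p-1},…,s₁) g(s₁,…,s_{p-1},t_{m-p+1},…,t_{m+n-2p+1}) ds`. -/
def starKer (m n p : ℕ) (f : (Fin m → ℝ) → ℂ) (g : (Fin n → ℝ) → ℂ)
    (t : Fin (m + n + 1 - 2 * p) → ℝ) (s : Fin (p - 1) → ℝ) : ℂ :=
  f (fun j => if (j : ℕ) < m - p + 1 then pad t j else pad s (m - 1 - (j : ℕ))) *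
  g (fun j => if (j : ℕ) < p - 1 then pad s j else pad t (m + (j : ℕ) + 1 - 2 * p))

/-- The star contraction `f ⋆_p^{p-1} g` of index `(p, p-1)`. -/
def starC (m n p : ℕ) (f : (Fin m → ℝ) → ℂ) (g : (Fin n → ℝ) → ℂ) :
    (Fin (m + n + 1 - 2 * p) → ℝ) → ℂ :=
  fun t => ∫ s in posOrthant (p - 1), starKer m n p f g t s

/-- The `q/2`-th arc contraction of two functions of `q` (even) variables,
expressed again as a function of `q` variables. -/
def contrHalf (q : ℕ) (f g : (Fin q → ℝ) → ℂ) : (Fin q → ℝ) → ℂ :=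
  fun t => ∫ s in posOrthant (q / 2),
    (f fun j => if (j : ℕ) < q - q / 2 then pad t j else pad s (q - 1 - (j : ℕ))) *
    (g fun j => if (j : ℕ) < q / 2 then pad s j else pad t (q + (j : ℕ) - 2 * (q / 2)))

/-- The full contraction `f ⌢_q g = ∫ f(t₁,…,t_q) g(t_q,…,t₁) dt` of two
functions of `q` variables. -/
def fullContr (q : ℕ) (f g : (Fin q → ℝ) → ℂ) : ℂ :=
  ∫ t in posOrthant q, f t * g fun i => t i.rev

/-- A `q`-dimensional square (cube): a product of `q` intervals of equal length. -/
def IsCube (q : ℕ) (S : Set (Fin q → ℝ)) : Prop :=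
  ∃ (a : Fin q → ℝ) (c : ℝ), S = Set.univ.pi fun i => Set.Icc (a i) (a i + c)

/-- One step of the left-bracketed iterated contraction, keeping track of the dimension. -/
def iterStep (q : ℕ) (acc : (d : ℕ) × ((Fin d → ℝ) → ℂ))
    (pr : ℕ × ((Fin q → ℝ) → ℂ)) : (d : ℕ) × ((Fin d → ℝ) → ℂ) :=
  ⟨acc.1 + q - 2 * pr.1, arc acc.1 q pr.1 acc.2 pr.2⟩

/-- The left-bracketed iterated contraction `(⋯((f₀ ⌢_{r₁} f₁) ⌢_{r₂} f₂)⋯) ⌢_{r_k} f_k`. -/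
def iterArc (q : ℕ) (f0 : (Fin q → ℝ) → ℂ) (l : List (ℕ × ((Fin q → ℝ) → ℂ))) :
    (d : ℕ) × ((Fin d → ℝ) → ℂ) :=
  l.foldl (iterStep q) ⟨q, f0⟩

/-- The value of a (`0`-dimensional, i.e. scalar) iterated contraction. -/
def scalarOf (x : (d : ℕ) × ((Fin d → ℝ) → ℂ)) : ℂ := x.2 fun _ => 0


/-- Membership in `A_m`: tuples `(r₁,…,r_{m-1}) ∈ {0,…,q}^{m-1}` (encoded as the values of
`r` at `1,…,m-1`) satisfying `r_p ≤ pq - 2(r₁+⋯+r_{p-1})` for `2 ≤ p ≤ m-1`. -/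
def memA (q m : ℕ) (r : ℕ → ℕ) : Prop :=
  (∀ p, 1 ≤ p → p ≤ m - 1 → r p ≤ q) ∧
  (∀ p, 2 ≤ p → p ≤ m - 1 → r p + 2 * ∑ k ∈ Finset.Icc 1 (p - 1), r k ≤ p * q)

/-- Membership in `B_m`: tuples of `A_m` with `2(r₁+⋯+r_{m-1}) = mq`. -/
def memB (q m : ℕ) (r : ℕ → ℕ) : Prop :=
  memA q m r ∧ 2 * ∑ k ∈ Finset.Icc 1 (m - 1), r k = m * q

/-- Membership in `D_m = B_m ∩ {0, q/2, q}^{m-1}`. -/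
def memD (q m : ℕ) (r : ℕ → ℕ) : Prop :=
  memB q m r ∧ ∀ p, 1 ≤ p → p ≤ m - 1 → (r p = 0 ∨ r p = q / 2 ∨ r p = q)

/-- Membership in `E_m = B_m \ D_m`. -/
def memE (q m : ℕ) (r : ℕ → ℕ) : Prop := memB q m r ∧ ¬ memD q m r

/-! ### Analytic part -/

theorem cs_sq {X : Type*} [MeasurableSpace X] (ν : Measure X) (u v : X → ℂ)
    (hu : MemLp u 2 ν) (hv : MemLp v 2 ν) :
    ‖∫ s, u s * v s ∂ν‖ ≤ Real.sqrt (∫ s, ‖u s‖ ^ 2 ∂ν) * Real.sqrt (∫ s, ‖v s‖ ^ 2 ∂ν) := by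
  have h := integral_mul_norm_le_Lp_mul_Lq (μ := ν) (f := u) (g := v) (p := 2) (q := 2)
    (by constructor <;> norm_num) (by simpa using hu) (by simpa using hv)
  simp only [Real.rpow_two, ← Real.sqrt_eq_rpow] at h
  refine (norm_integral_le_integral_norm _).trans ?_
  simpa only [norm_mul] using h

theorem memLp_sections {X : Type*} [MeasurableSpace X] (ν : Measure X) [SigmaFinite ν]
    (K : X × X → ℂ) (hK : MemLp K 2 (ν.prod ν)) :
    ∀ᵐ x ∂ν, MemLp (fun s => K (x, s)) 2 ν := by
  have h1 := hK.1.prodMk_left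
  have h2 := ((memLp_two_iff_integrable_sq_norm hK.1).1 hK).prod_right_ae
  filter_upwards [h1, h2] with x hx1 hx2
  exact (memLp_two_iff_integrable_sq_norm hx1).2 hx2

theorem memLp_sections' {X : Type*} [MeasurableSpace X] (ν : Measure X) [SigmaFinite ν]
    (K : X × X → ℂ) (hK : MemLp K 2 (ν.prod ν)) :
    ∀ᵐ y ∂ν, MemLp (fun s => K (s, y)) 2 ν :=
  memLp_sections ν (fun z => K z.swap)
    (hK.comp_measurePreserving Measure.measurePreserving_swap)

theorem good_ae {X : Type*} [MeasurableSpace X] (ν : Measure X) [SigmaFinite ν]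
    (K L : X × X → ℂ) (hK : MemLp K 2 (ν.prod ν)) (hL : MemLp L 2 (ν.prod ν)) :
    ∀ᵐ z ∂(ν.prod ν), MemLp (fun s => K (z.1, s)) 2 ν ∧ MemLp (fun s => L (s, z.2)) 2 ν := by
  have h1 := Measure.quasiMeasurePreserving_fst (μ := ν) (ν := ν) |>.ae (memLp_sections ν K hK)
  have h2 := Measure.quasiMeasurePreserving_snd (μ := ν) (ν := ν) |>.ae (memLp_sections' ν L hL)
  exact h1.and h2

def opComp {X : Type*} [MeasurableSpace X] (ν : Measure X) (K L : X × X → ℂ) (z : X × X) : ℂ :=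
  ∫ s, K (z.1, s) * L (s, z.2) ∂ν

theorem opComp_memLp {X : Type*} [MeasurableSpace X] (ν : Measure X) [SigmaFinite ν]
    (K L : X × X → ℂ) (hK : MemLp K 2 (ν.prod ν)) (hL : MemLp L 2 (ν.prod ν)) :
    MemLp (opComp ν K L) 2 (ν.prod ν) ∧
    ∫ z, ‖opComp ν K L z‖ ^ 2 ∂(ν.prod ν) ≤
      (∫ z, ‖K z‖ ^ 2 ∂(ν.prod ν)) * ∫ z, ‖L z‖ ^ 2 ∂(ν.prod ν) := by
  have hmeas : AEStronglyMeasurable (opComp ν K L) (ν.prod ν) := by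
    refine AEStronglyMeasurable.integral_prod_right' (μ := ν.prod ν) (ν := ν)
      (f := fun w : (X × X) × X => K (w.1.1, w.2) * L (w.2, w.1.2)) ?_
    refine AEStronglyMeasurable.mul ?_ ?_
    · refine hK.1.comp_quasiMeasurePreserving (f := fun w : (X × X) × X => (w.1.1, w.2)) ?_
      exact Measure.quasiMeasurePreserving_snd.comp
        ((MeasurePreserving.mk MeasurableEquiv.prodAssoc.measurable
          (Measure.prodAssoc_prod (μ := ν) (ν := ν) (τ := ν))).comp
        (Measure.measurePreserving_swap.prod (MeasurePreserving.id ν))).quasiMeasurePreserving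
    · refine hL.1.comp_quasiMeasurePreserving (f := fun w : (X × X) × X => (w.2, w.1.2)) ?_
      exact Measure.measurePreserving_swap.quasiMeasurePreserving.comp
        (Measure.quasiMeasurePreserving_snd.comp
        (MeasurePreserving.mk MeasurableEquiv.prodAssoc.measurable
          (Measure.prodAssoc_prod (μ := ν) (ν := ν) (τ := ν))).quasiMeasurePreserving)
  have iK := (memLp_two_iff_integrable_sq_norm hK.1).1 hK
  have iL := (memLp_two_iff_integrable_sq_norm hL.1).1 hL
  have ia := iK.integral_prod_left
  have ib := iL.integral_prod_right
  have iab := ia.mul_prod ib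
  have hb : ∀ᵐ z ∂(ν.prod ν), ‖opComp ν K L z‖ ^ 2 ≤
      (∫ s, ‖K (z.1, s)‖ ^ 2 ∂ν) * ∫ s, ‖L (s, z.2)‖ ^ 2 ∂ν := by
    filter_upwards [good_ae ν K L hK hL] with z hz
    have := cs_sq ν _ _ hz.1 hz.2
    have h3 := pow_le_pow_left₀ (norm_nonneg _) this 2
    rw [mul_pow, Real.sq_sqrt (by positivity), Real.sq_sqrt (by positivity)] at h3
    exact h3
  have iH : Integrable (fun z => ‖opComp ν K L z‖ ^ 2) (ν.prod ν) := by
    refine iab.mono' (hmeas.norm.pow 2) ?_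
    filter_upwards [hb] with z hz
    rw [Real.norm_of_nonneg (by positivity)]
    exact hz
  refine ⟨(memLp_two_iff_integrable_sq_norm hmeas).2 iH, ?_⟩
  refine (integral_mono_ae iH iab hb).trans (le_of_eq ?_)
  rw [integral_prod _ iK, integral_prod_symm _ iL]
  exact integral_prod_mul (μ := ν) (ν := ν) (fun x => ∫ s, ‖K (x, s)‖ ^ 2 ∂ν)
    (fun y => ∫ s, ‖L (s, y)‖ ^ 2 ∂ν)

theorem opComp_sub {X : Type*} [MeasurableSpace X] (ν : Measure X) [SigmaFinite ν]
    (K K' L : X × X → ℂ) (hK : MemLp K 2 (ν.prod ν)) (hK' : MemLp K' 2 (ν.prod ν))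
    (hL : MemLp L 2 (ν.prod ν)) :
    opComp ν (fun z => K z - K' z) L =ᵐ[ν.prod ν]
      fun z => opComp ν K L z - opComp ν K' L z := by
  filter_upwards [good_ae ν K L hK hL, good_ae ν K' L hK' hL] with z h1 h2
  unfold opComp
  rw [← integral_sub]
  · simp only [sub_mul]
  · exact h1.1.integrable_mul h1.2
  · exact h2.1.integrable_mul h2.2

/-! ### The orthant measures -/

theorem μpos_eq (n : ℕ) :
    μpos n = Measure.pi (fun _ : Fin n => (volume : Measure ℝ).restrict (Set.Ici 0)) := by
  unfold μpos
  rw [← Measure.restrict_pi_pi, volume_pi]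
  congr 1
  ext x
  simp only [posOrthant, Set.mem_ofPred_eq, Set.mem_univ_pi, Set.mem_Ici]

instance (n : ℕ) : SigmaFinite (μpos n) := by unfold μpos; infer_instance

theorem rev_mp (n : ℕ) :
    MeasurePreserving (fun (t : Fin n → ℝ) (i : Fin n) => t i.rev) (μpos n) (μpos n) := by
  have hm : Measurable (fun (t : Fin n → ℝ) (i : Fin n) => t i.rev) := by fun_prop
  refine ⟨hm, ?_⟩
  rw [μpos_eq]
  symm
  refine Measure.pi_eq fun s hs => ?_
  rw [Measure.map_apply hm (MeasurableSet.univ_pi hs)]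
  have : (fun (t : Fin n → ℝ) (i : Fin n) => t i.rev) ⁻¹' Set.univ.pi s
      = Set.univ.pi (fun i => s i.rev) := by
    ext t
    simp only [Set.mem_preimage, Set.mem_univ_pi]
    constructor
    · intro h i; simpa using h i.rev
    · intro h i; simpa using h i.rev
  rw [this, Measure.pi_pi]
  exact Equiv.prod_comp Fin.revPerm
    (fun i => (volume : Measure ℝ).restrict (Set.Ici 0) (s i))

def glue (h : ℕ) (z : (Fin h → ℝ) × (Fin h → ℝ)) : Fin (h + h) → ℝ := Fin.append z.1 z.2

def split2 (h : ℕ) (t : Fin (h + h) → ℝ) : (Fin h → ℝ) × (Fin h → ℝ) :=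
  (fun i => t (Fin.castAdd h i), fun i => t (Fin.natAdd h i))

theorem glue_mp (h : ℕ) : MeasurePreserving (glue h) ((μpos h).prod (μpos h)) (μpos (h + h)) := by
  have hm : Measurable (glue h) := by
    rw [measurable_pi_iff]
    intro a
    refine Fin.addCases (fun i => ?_) (fun i => ?_) a
    · simp only [glue, Fin.append_left]; fun_prop
    · simp only [glue, Fin.append_right]; fun_prop
  refine ⟨hm, ?_⟩
  rw [μpos_eq, μpos_eq]
  symm
  refine Measure.pi_eq fun s hs => ?_
  rw [Measure.map_apply hm (MeasurableSet.univ_pi hs)]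
  have : (glue h) ⁻¹' Set.univ.pi s
      = (Set.univ.pi fun i => s (Fin.castAdd h i)) ×ˢ (Set.univ.pi fun i => s (Fin.natAdd h i)) := by
    ext t
    simp only [Set.mem_preimage, Set.mem_univ_pi, Set.mem_prod, glue]
    constructor
    · intro H
      exact ⟨fun i => by simpa using H (Fin.castAdd h i), fun i => by
        simpa only [Fin.append_right] using H (Fin.natAdd h i)⟩
    · rintro ⟨h1, h2⟩ a
      refine Fin.addCases (fun i => ?_) (fun i => ?_) a
      · simpa using h1 i
      · simpa only [Fin.append_right] using h2 i
  rw [this, Measure.prod_prod, Measure.pi_pi, Measure.pi_pi, Fin.prod_univ_add]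

theorem split2_mp (h : ℕ) :
    MeasurePreserving (split2 h) (μpos (h + h)) ((μpos h).prod (μpos h)) := by
  have hm : Measurable (split2 h) := by unfold split2; fun_prop
  refine ⟨hm, ?_⟩
  rw [← (glue_mp h).map_eq, Measure.map_map hm (glue_mp h).measurable]
  have : split2 h ∘ glue h = id := by
    funext z
    simp only [split2, glue, Function.comp_apply, Fin.append_left, Fin.append_right, id_eq]
  rw [this, Measure.map_id]

theorem integral_sq_mp {X Y : Type*} [MeasurableSpace X] [MeasurableSpace Y] {μ : Measure X}
    {ν : Measure Y} {e : X → Y} (he : MeasurePreserving e μ ν) (g : Y → ℂ) (hg : MemLp g 2 ν) :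
    ∫ x, ‖g (e x)‖ ^ 2 ∂μ = ∫ y, ‖g y‖ ^ 2 ∂ν := by
  have h := integral_map (μ := μ) (φ := e) he.aemeasurable (f := fun y => ‖g y‖ ^ 2)
    (by rw [he.map_eq]; exact hg.1.norm.pow 2)
  rw [← h, he.map_eq]

theorem revglue_mp (h : ℕ) : MeasurePreserving
    (fun z : (Fin h → ℝ) × (Fin h → ℝ) => glue h (z.1, fun i => z.2 i.rev))
    ((μpos h).prod (μpos h)) (μpos (h + h)) :=
  (glue_mp h).comp ((MeasurePreserving.id (μpos h)).prod (rev_mp h))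

theorem contrHalf_eq (h : ℕ) (G F : (Fin (h + h) → ℝ) → ℂ) (t : Fin (h + h) → ℝ) :
    contrHalf (h + h) G F t = opComp (μpos h)
      (fun z => G (glue h (z.1, fun i => z.2 i.rev))) (fun z => F (glue h z)) (split2 h t) := by
  have hh : (h + h) / 2 = h := by omega
  have key : ∀ h' : ℕ, h' = h →
      ∫ s in posOrthant h',
        (G fun j => if (j : ℕ) < (h + h) - h' then pad t j else pad s ((h + h) - 1 - (j : ℕ))) *
        (F fun j => if (j : ℕ) < h' then pad s j else pad t ((h + h) + (j : ℕ) - 2 * h'))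
      = opComp (μpos h)
      (fun z => G (glue h (z.1, fun i => z.2 i.rev))) (fun z => F (glue h z)) (split2 h t) := by
    rintro _ rfl
    unfold opComp μpos
    congr 1
    funext s
    congr 2
    · funext j
      refine Fin.addCases (fun i => ?_) (fun i => ?_) j
      · simp only [glue, split2, pad, Fin.append_left, Fin.val_castAdd]
        rw [if_pos (by omega), dif_pos (by omega)]
        rfl
      · simp only [glue, split2, pad, Fin.append_right, Fin.val_natAdd]
        rw [if_neg (by omega), dif_pos (by omega)]
        congr 1
        ext
        simp only [Fin.val_rev]
        omega
    · funext j
      refine Fin.addCases (fun i => ?_) (fun i => ?_) j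
      · simp [glue, pad, Fin.append_left]
      · simp only [glue, split2, pad, Fin.append_right, Fin.val_natAdd]
        rw [if_neg (by omega), dif_pos (by omega)]
        congr 1
        ext
        simp only [Fin.val_natAdd]
        omega
  exact key _ hh

theorem contrHalf_memLp (q : ℕ) (hq : q % 2 = 0) (G F : (Fin q → ℝ) → ℂ)
    (hG : MemLp G 2 (μpos q)) (hF : MemLp F 2 (μpos q)) :
    MemLp (contrHalf q G F) 2 (μpos q) ∧
      L2norm q (contrHalf q G F) ≤ L2norm q G * L2norm q F := by
  obtain ⟨h, rfl⟩ : ∃ h, q = h + h := ⟨q / 2, by omega⟩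
  have e : contrHalf (h + h) G F = fun t => opComp (μpos h)
      (fun z => G (glue h (z.1, fun i => z.2 i.rev))) (fun z => F (glue h z)) (split2 h t) :=
    funext (contrHalf_eq h G F)
  have hm := opComp_memLp (μpos h) _ _ (hG.comp_measurePreserving (revglue_mp h))
    (hF.comp_measurePreserving (glue_mp h))
  refine ⟨?_, ?_⟩
  · rw [e]
    exact hm.1.comp_measurePreserving (split2_mp h)
  · unfold L2norm
    rw [e, ← Real.sqrt_mul (by positivity)]
    refine Real.sqrt_le_sqrt ?_
    have h1 := integral_sq_mp (split2_mp h) _ hm.1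
    have h2 := hm.2
    simp only [Function.comp_apply] at h2
    rw [integral_sq_mp (revglue_mp h) G hG, integral_sq_mp (glue_mp h) F hF] at h2
    exact h1.le.trans h2

theorem contrHalf_sub (q : ℕ) (hq : q % 2 = 0) (G G' F : (Fin q → ℝ) → ℂ)
    (hG : MemLp G 2 (μpos q)) (hG' : MemLp G' 2 (μpos q)) (hF : MemLp F 2 (μpos q)) :
    contrHalf q (fun t => G t - G' t) F =ᵐ[μpos q]
      fun t => contrHalf q G F t - contrHalf q G' F t := by
  obtain ⟨h, rfl⟩ : ∃ h, q = h + h := ⟨q / 2, by omega⟩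
  have := opComp_sub (μpos h) _ _ _ (hG.comp_measurePreserving (revglue_mp h))
    (hG'.comp_measurePreserving (revglue_mp h)) (hF.comp_measurePreserving (glue_mp h))
  have h2 := (split2_mp h).quasiMeasurePreserving.ae this
  filter_upwards [h2] with t ht
  rw [contrHalf_eq, contrHalf_eq, contrHalf_eq]
  exact ht

theorem L2norm_eq (q : ℕ) (G : (Fin q → ℝ) → ℂ) (hG : MemLp G 2 (μpos q)) :
    L2norm q G = (eLpNorm G 2 (μpos q)).toReal := by
  rw [hG.eLpNorm_eq_integral_rpow_norm (by norm_num) (by norm_num)]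
  rw [ENNReal.toReal_ofReal (by positivity)]
  simp [L2norm, Real.sqrt_eq_rpow]

theorem L2norm_add_le (q : ℕ) (G F : (Fin q → ℝ) → ℂ) (hG : MemLp G 2 (μpos q))
    (hF : MemLp F 2 (μpos q)) :
    L2norm q (fun t => G t + F t) ≤ L2norm q G + L2norm q F := by
  have hs := hG.add hF
  have := eLpNorm_add_le hG.1 hF.1 (p := 2) (by norm_num)
  have h3 := ENNReal.toReal_mono (ENNReal.add_ne_top.2 ⟨hG.2.ne, hF.2.ne⟩) this
  rw [ENNReal.toReal_add hG.2.ne hF.2.ne] at h3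
  rw [L2norm_eq q G hG, L2norm_eq q F hF]
  rw [← L2norm_eq q _ hs] at h3
  exact h3

theorem L2norm_congr (q : ℕ) (G F : (Fin q → ℝ) → ℂ) (h : G =ᵐ[μpos q] F) :
    L2norm q G = L2norm q F := by
  unfold L2norm
  congr 1
  refine integral_congr_ae ?_
  filter_upwards [h] with t ht
  rw [ht]

theorem L2norm_nonneg (q : ℕ) (G : (Fin q → ℝ) → ℂ) : 0 ≤ L2norm q G := Real.sqrt_nonneg _

theorem memLp_conj (q : ℕ) (F : (Fin q → ℝ) → ℂ) (hF : MemLp F 2 (μpos q)) :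
    MemLp (fun t => (starRingEnd ℂ) (F t)) 2 (μpos q) :=
  hF.star

theorem L2inner_sub (q : ℕ) (G G' F : (Fin q → ℝ) → ℂ) (hG : MemLp G 2 (μpos q))
    (hG' : MemLp G' 2 (μpos q)) (hF : MemLp F 2 (μpos q)) :
    L2inner q (fun t => G t - G' t) F = L2inner q G F - L2inner q G' F := by
  unfold L2inner
  rw [← integral_sub]
  · simp only [sub_mul]
  · exact hG.integrable_mul (memLp_conj q F hF)
  · exact hG'.integrable_mul (memLp_conj q F hF)

theorem L2inner_le (q : ℕ) (G F : (Fin q → ℝ) → ℂ) (hG : MemLp G 2 (μpos q))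
    (hF : MemLp F 2 (μpos q)) : ‖L2inner q G F‖ ≤ L2norm q G * L2norm q F := by
  have := cs_sq (μpos q) _ _ hG (memLp_conj q F hF)
  simpa [L2inner, L2norm] using this

theorem L2norm_sq (q : ℕ) (F : (Fin q → ℝ) → ℂ) :
    L2norm q F = Real.sqrt (L2inner q F F).re := by
  unfold L2norm L2inner
  congr 1
  have : ∀ x, F x * (starRingEnd ℂ) (F x) = ((‖F x‖ ^ 2 : ℝ) : ℂ) := by
    intro x
    rw [Complex.mul_conj, Complex.normSq_eq_norm_sq]
  simp only [this]
  rw [integral_complex_ofReal, Complex.ofReal_re]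

theorem revContr_eq (q : ℕ) (G F : (Fin q → ℝ) → ℂ) (hG : MemLp G 2 (μpos q))
    (hF : MemLp F 2 (μpos q)) (hs : IsSymmFn q F) :
    ∫ s in posOrthant q, G (fun i => s i.rev) * F s = L2inner q G F := by
  have h1 : ∫ s in posOrthant q, G (fun i => s i.rev) * F s
      = ∫ s, (fun u => G u * (starRingEnd ℂ) (F u)) (fun i => s i.rev) ∂(μpos q) := by
    refine integral_congr_ae ?_
    filter_upwards [hs] with s h
    rw [h]
    rfl
  rw [h1]
  have h := integral_map (μ := μpos q) (φ := fun (t : Fin q → ℝ) (i : Fin q) => t i.rev)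
    (rev_mp q).aemeasurable (f := fun u => G u * (starRingEnd ℂ) (F u))
    (by rw [(rev_mp q).map_eq]; exact hG.1.mul (memLp_conj q F hF).1)
  rw [← h, (rev_mp q).map_eq]
  rfl

/-! ### Combinatorial part -/

theorem pad_fun {d i : ℕ} (e : ℕ → ℝ) (h : i < d) : pad (fun j : Fin d => e j) i = e i := by
  simp [pad, h]

theorem pad_val {d : ℕ} (s : Fin d → ℝ) (j : Fin d) : pad s j = s j := by
  simp [pad]

theorem idx_lt {q i k j : ℕ} (hi : i < k) (hj : j < q) : q * i + j < q * k := by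
  have : q * (i + 1) ≤ q * k := Nat.mul_le_mul_left q hi
  rw [Nat.mul_succ] at this
  omega

/-- `c · g₀ ⊗ ⋯ ⊗ g_{k-1}`, each `g i` a function of `q` variables. -/
def blk (q k : ℕ) (c : ℂ) (g : ℕ → (Fin q → ℝ) → ℂ) {d : ℕ} (t : Fin d → ℝ) : ℂ :=
  c * ∏ i ∈ Finset.range k, g i (fun j : Fin q => pad t (q * i + j))

theorem blk_congr (q k : ℕ) (c : ℂ) (g g' : ℕ → (Fin q → ℝ) → ℂ) {d d' : ℕ}
    (t : Fin d → ℝ) (t' : Fin d' → ℝ) (hg : ∀ i < k, g i = g' i)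
    (ht : ∀ i < q * k, pad t i = pad t' i) : blk q k c g t = blk q k c g' t' := by
  unfold blk
  congr 1
  refine Finset.prod_congr rfl fun i hi => ?_
  have hi := Finset.mem_range.1 hi
  rw [hg i hi]
  congr 1
  funext j
  exact ht _ (idx_lt hi j.2)

theorem blk_succ (q k : ℕ) (c : ℂ) (g : ℕ → (Fin q → ℝ) → ℂ) {d : ℕ} (t : Fin d → ℝ) :
    blk q (k + 1) c g t = blk q k c g t * g k (fun j : Fin q => pad t (q * k + j)) := by
  unfold blk
  rw [Finset.prod_range_succ, mul_assoc]

theorem step_zero (q k : ℕ) (c : ℂ) (g : ℕ → (Fin q → ℝ) → ℂ) (F : (Fin (q * k) → ℝ) → ℂ)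
    (hF : ∀ t, F t = blk q k c g t) (f : (Fin q → ℝ) → ℂ) (t : Fin (q * k + q - 2 * 0) → ℝ) :
    arc (q * k) q 0 F f t = blk q (k + 1) c (Function.update g k f) t := by
  have hk : ∀ s : Fin 0 → ℝ, arcKer (q * k) q 0 F f t s
      = blk q (k + 1) c (Function.update g k f) t := by
    intro s
    unfold arcKer
    rw [blk_succ, hF]
    congr 1
    · refine blk_congr _ _ _ _ _ _ _ ?_ ?_
      · intro i hi
        rw [Function.update_of_ne hi.ne]
      · intro i hi
        rw [pad_fun (fun j => if j < q * k - 0 then pad t j else pad s (q * k - 1 - j)) hi]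
        rw [if_pos (by omega)]
    · simp
  unfold arc
  simp only [hk]
  have hp : posOrthant 0 = Set.univ := by
    ext x; simp [posOrthant]
  rw [hp, Measure.restrict_univ, integral_const]
  simp [measureReal_def, volume_pi]

theorem step_half (q k : ℕ) (hq : q % 2 = 0) (c : ℂ) (g : ℕ → (Fin q → ℝ) → ℂ)
    (F : (Fin (q * (k + 1)) → ℝ) → ℂ)
    (hF : ∀ t, F t = blk q (k + 1) c g t) (f : (Fin q → ℝ) → ℂ)
    (t : Fin (q * (k + 1) + q - 2 * (q / 2)) → ℝ) :
    arc (q * (k + 1)) q (q / 2) F f t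
      = blk q (k + 1) c (Function.update g k (contrHalf q (g k) f)) t := by
  have hmul : q * (k + 1) = q * k + q := Nat.mul_succ q k
  rw [blk_succ, Function.update_self]
  unfold arc contrHalf
  rw [← integral_const_mul]
  congr 1
  funext s
  unfold arcKer
  rw [hF, blk_succ, mul_assoc]
  have hpu : ∀ i < q * (k + 1),
      pad (fun j : Fin (q * (k + 1)) => if (j : ℕ) < q * (k + 1) - q / 2 then pad t j
        else pad s (q * (k + 1) - 1 - (j : ℕ))) i =
      if i < q * (k + 1) - q / 2 then pad t i else pad s (q * (k + 1) - 1 - i) := fun i hi =>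
    pad_fun (fun j => if j < q * (k + 1) - q / 2 then pad t j
        else pad s (q * (k + 1) - 1 - j)) hi
  have hpt : ∀ i < q, pad (fun j : Fin q => pad t (q * k + j)) i = pad t (q * k + i) :=
    fun i hi => pad_fun (fun j => pad t (q * k + j)) hi
  congr 1
  · refine blk_congr _ _ _ _ _ _ _ ?_ ?_
    · intro i hi
      rw [Function.update_of_ne hi.ne]
    · intro i hi
      rw [hpu i (by omega), if_pos (by omega)]
  · congr 2
    · funext j
      have := j.2
      rw [hpu _ (by omega)]
      by_cases hj : (j : ℕ) < q - q / 2
      · rw [if_pos (by omega), if_pos hj, hpt _ j.2]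
      · rw [if_neg (by omega), if_neg hj]
        congr 1
        omega
    · funext j
      have := j.2
      by_cases hj : (j : ℕ) < q / 2
      · rw [if_pos hj, if_pos hj]
      · rw [if_neg hj, if_neg hj, hpt _ (by omega)]
        congr 1
        omega

theorem step_full (q k : ℕ) (c : ℂ) (g : ℕ → (Fin q → ℝ) → ℂ)
    (F : (Fin (q * (k + 1)) → ℝ) → ℂ)
    (hF : ∀ t, F t = blk q (k + 1) c g t) (f : (Fin q → ℝ) → ℂ)
    (t : Fin (q * (k + 1) + q - 2 * q) → ℝ) :
    arc (q * (k + 1)) q q F f t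
      = blk q k (c * ∫ s in posOrthant q, g k (fun i => s i.rev) * f s) g t := by
  have hmul : q * (k + 1) = q * k + q := Nat.mul_succ q k
  have : blk q k (c * ∫ s in posOrthant q, g k (fun i => s i.rev) * f s) g t
      = blk q k c g t * ∫ s in posOrthant q, g k (fun i => s i.rev) * f s := by
    unfold blk; ring
  rw [this]
  unfold arc
  rw [← integral_const_mul]
  congr 1
  funext s
  unfold arcKer
  rw [hF, blk_succ, mul_assoc]
  have hpu : ∀ i < q * (k + 1),
      pad (fun j : Fin (q * (k + 1)) => if (j : ℕ) < q * (k + 1) - q then pad t j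
        else pad s (q * (k + 1) - 1 - (j : ℕ))) i =
      if i < q * (k + 1) - q then pad t i else pad s (q * (k + 1) - 1 - i) := fun i hi =>
    pad_fun (fun j => if j < q * (k + 1) - q then pad t j
        else pad s (q * (k + 1) - 1 - j)) hi
  congr 1
  · refine blk_congr _ _ _ _ _ _ _ (fun _ _ => rfl) ?_
    intro i hi
    rw [hpu i (by omega), if_pos (by omega)]
  · congr 2
    · funext j
      have := j.2
      rw [hpu _ (by omega), if_neg (by omega), ← pad_val s j.rev]
      congr 1
      simp only [Fin.val_rev]
      omega
    · funext j
      rw [if_pos j.2, pad_val]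

def IsBlk (q k : ℕ) (c : ℂ) (g : ℕ → (Fin q → ℝ) → ℂ) (acc : (d : ℕ) × ((Fin d → ℝ) → ℂ)) : Prop :=
  acc.1 = q * k ∧ ∀ t, acc.2 t = blk q k c g t

theorem isBlk_zero (q k : ℕ) (c : ℂ) (g : ℕ → (Fin q → ℝ) → ℂ) (acc : (d : ℕ) × ((Fin d → ℝ) → ℂ))
    (h : IsBlk q k c g acc) (f : (Fin q → ℝ) → ℂ) :
    IsBlk q (k + 1) c (Function.update g k f) (iterStep q acc (0, f)) := by
  obtain ⟨d, F⟩ := acc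
  obtain ⟨rfl, hF⟩ := h
  refine ⟨?_, step_zero q k c g F hF f⟩
  simp only [iterStep, Nat.mul_succ]
  omega

theorem isBlk_half (q k : ℕ) (hq : q % 2 = 0) (c : ℂ) (g : ℕ → (Fin q → ℝ) → ℂ)
    (acc : (d : ℕ) × ((Fin d → ℝ) → ℂ))
    (h : IsBlk q (k + 1) c g acc) (f : (Fin q → ℝ) → ℂ) :
    IsBlk q (k + 1) c (Function.update g k (contrHalf q (g k) f))
      (iterStep q acc (q / 2, f)) := by
  obtain ⟨d, F⟩ := acc
  obtain ⟨rfl, hF⟩ := h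
  refine ⟨?_, step_half q k hq c g F hF f⟩
  simp only [iterStep, Nat.mul_succ]
  omega

theorem isBlk_full (q k : ℕ) (c : ℂ) (g : ℕ → (Fin q → ℝ) → ℂ)
    (acc : (d : ℕ) × ((Fin d → ℝ) → ℂ))
    (h : IsBlk q (k + 1) c g acc) (f : (Fin q → ℝ) → ℂ) :
    IsBlk q k (c * ∫ s in posOrthant q, g k (fun i => s i.rev) * f s) g
      (iterStep q acc (q, f)) := by
  obtain ⟨d, F⟩ := acc
  obtain ⟨rfl, hF⟩ := h
  refine ⟨?_, step_full q k c g F hF f⟩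
  simp only [iterStep, Nat.mul_succ]
  omega

theorem reindex_arc (q : ℕ) (h : q + q - 2 * (q / 2) = q) (F G : (Fin q → ℝ) → ℂ)
    (t : Fin q → ℝ) : reindex h (arc q q (q / 2) F G) t = contrHalf q F G t := by
  have hp : ∀ i, pad (fun j => t (Fin.cast h j)) i = pad t i := by
    intro i
    unfold pad
    by_cases hi : i < q
    · rw [dif_pos hi, dif_pos (by omega)]; rfl
    · rw [dif_neg hi, dif_neg (by omega)]
  unfold reindex arc arcKer contrHalf
  simp only [hp]

/-! ### Asymptotic blocks -/

def GoodBlk (q : ℕ) (f : ℕ → ℕ → (Fin q → ℝ) → ℂ) (g : ℕ → (Fin q → ℝ) → ℂ) (a : ℕ) : Prop :=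
  (∀ n, MemLp (g n) 2 (μpos q)) ∧
    Tendsto (fun n => L2norm q (fun t => g n t - f n a t)) atTop (𝓝 0)

theorem norm_tendsto (q : ℕ) (lam : ℝ) (f : ℕ → ℕ → (Fin q → ℝ) → ℂ)
    (hinner : ∀ i j, Filter.Tendsto (fun n => L2inner q (f n i) (f n j)) Filter.atTop
      (nhds (lam : ℂ))) (b : ℕ) :
    Tendsto (fun n => L2norm q (f n b)) atTop (𝓝 (Real.sqrt lam)) := by
  simp only [L2norm_sq]
  have := (Complex.continuous_re.tendsto _).comp (hinner b b)
  exact (Real.continuous_sqrt.tendsto _).comp this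

theorem good_half (q : ℕ) (hqe : q % 2 = 0) (lam : ℝ) (f : ℕ → ℕ → (Fin q → ℝ) → ℂ)
    (hmem : ∀ n i, MemLp (f n i) 2 (μpos q))
    (hinner : ∀ i j, Filter.Tendsto (fun n => L2inner q (f n i) (f n j)) Filter.atTop
      (nhds (lam : ℂ)))
    (hc : ∀ i j, Tendsto (fun n => L2norm q (fun t =>
      contrHalf q (f n i) (f n j) t - f n j t)) atTop (𝓝 0))
    (g : ℕ → (Fin q → ℝ) → ℂ) (a b : ℕ) (hg : GoodBlk q f g a) :
    GoodBlk q f (fun n => contrHalf q (g n) (f n b)) b := by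
  refine ⟨fun n => (contrHalf_memLp q hqe _ _ (hg.1 n) (hmem n b)).1, ?_⟩
  have hlim : Tendsto (fun n => L2norm q (fun t => g n t - f n a t) * L2norm q (f n b) +
      L2norm q (fun t => contrHalf q (f n a) (f n b) t - f n b t)) atTop (𝓝 0) := by
    have := (hg.2.mul (norm_tendsto q lam f hinner b)).add (hc a b)
    simpa using this
  refine squeeze_zero (fun n => L2norm_nonneg _ _) (fun n => ?_) hlim
  have hd : MemLp (fun t => g n t - f n a t) 2 (μpos q) := (hg.1 n).sub (hmem n a)
  have h1 := contrHalf_memLp q hqe _ _ hd (hmem n b)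
  have h2 := contrHalf_memLp q hqe _ _ (hmem n a) (hmem n b)
  have h3 : (fun t => contrHalf q (g n) (f n b) t - f n b t) =ᵐ[μpos q]
      fun t => contrHalf q (fun t => g n t - f n a t) (f n b) t +
        (contrHalf q (f n a) (f n b) t - f n b t) := by
    filter_upwards [contrHalf_sub q hqe _ _ _ (hg.1 n) (hmem n a) (hmem n b)] with t ht
    rw [ht]
    ring
  rw [L2norm_congr q _ _ h3]
  refine (L2norm_add_le q _ _ h1.1 (h2.1.sub (hmem n b))).trans ?_
  exact add_le_add h1.2 le_rfl

theorem good_full (q : ℕ) (lam : ℝ) (f : ℕ → ℕ → (Fin q → ℝ) → ℂ)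
    (hmem : ∀ n i, MemLp (f n i) 2 (μpos q)) (hsym : ∀ n i, IsSymmFn q (f n i))
    (hinner : ∀ i j, Filter.Tendsto (fun n => L2inner q (f n i) (f n j)) Filter.atTop
      (nhds (lam : ℂ)))
    (g : ℕ → (Fin q → ℝ) → ℂ) (a b : ℕ) (hg : GoodBlk q f g a) :
    Tendsto (fun n => ∫ s in posOrthant q, g n (fun i => s i.rev) * f n b s) atTop
      (𝓝 (lam : ℂ)) := by
  have e : ∀ n, ∫ s in posOrthant q, g n (fun i => s i.rev) * f n b s
      = L2inner q (fun t => g n t - f n a t) (f n b) + L2inner q (f n a) (f n b) := by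
    intro n
    rw [revContr_eq q _ _ (hg.1 n) (hmem n b) (hsym n b),
      L2inner_sub q _ _ _ (hg.1 n) (hmem n a) (hmem n b)]
    ring
  simp only [e]
  have h0 : Tendsto (fun n => L2inner q (fun t => g n t - f n a t) (f n b)) atTop (𝓝 0) := by
    refine squeeze_zero_norm (fun n => L2inner_le q _ _ ((hg.1 n).sub (hmem n a)) (hmem n b)) ?_
    simpa using hg.2.mul (norm_tendsto q lam f hinner b)
  simpa using h0.add (hinner a b)

theorem main_induction (q : ℕ) (hq2 : 2 ≤ q) (hqe : q % 2 = 0) (lam : ℝ)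
    (f : ℕ → ℕ → (Fin q → ℝ) → ℂ)
    (hmem : ∀ n i, MemLp (f n i) 2 (μpos q)) (hsym : ∀ n i, IsSymmFn q (f n i))
    (hinner : ∀ i j, Filter.Tendsto (fun n => L2inner q (f n i) (f n j)) Filter.atTop
      (nhds (lam : ℂ)))
    (hc : ∀ i j, Tendsto (fun n => L2norm q (fun t =>
      contrHalf q (f n i) (f n j) t - f n j t)) atTop (𝓝 0))
    (m : ℕ) (χ : ℕ → ℕ) (r : ℕ → ℕ) (hr : memD q m r) (p : ℕ) (hp : p ≤ m - 1) :
    ∃ (k : ℕ) (c : ℕ → ℂ) (g : ℕ → ℕ → (Fin q → ℝ) → ℂ),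
      q * k + 2 * ∑ i ∈ Finset.Icc 1 p, r i = (p + 1) * q ∧
      (∀ n, IsBlk q k (c n) (fun i => g i n) (iterArc q (f n (χ 1))
        ((List.range p).map fun k => (r (k + 1), f n (χ (k + 2)))))) ∧
      Tendsto c atTop (𝓝 ((lam : ℂ) ^ (((Finset.Icc 1 p).filter fun i => r i = q).card))) ∧
      ∀ i, ∃ a, GoodBlk q f (g i) a := by
  induction p with
  | zero =>
    refine ⟨1, fun _ => 1, fun _ n => f n (χ 1), by simp, fun n => ⟨by simp [iterArc], ?_⟩,
      by simp, fun i => ⟨χ 1, fun n => hmem n _, by simp [L2norm]⟩⟩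
    change ∀ t : Fin q → ℝ, f n (χ 1) t = _
    intro t
    simp only [blk, Finset.prod_range_one, one_mul, Nat.mul_zero, Nat.zero_add]
    congr 1
    funext j
    exact (pad_val t j).symm
  | succ p ih =>
    obtain ⟨k, c, g, hk, hblk, hcl, hgood⟩ := ih (by omega)
    have hsum : ∑ i ∈ Finset.Icc 1 (p + 1), r i = ∑ i ∈ Finset.Icc 1 p, r i + r (p + 1) :=
      Finset.sum_Icc_succ_top (by omega) _
    have hcard : ((Finset.Icc 1 (p + 1)).filter fun i => r i = q).card
        = ((Finset.Icc 1 p).filter fun i => r i = q).card + if r (p + 1) = q then 1 else 0 := by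
      rw [← Finset.insert_Icc_right_eq_Icc_add_one (by omega), Finset.filter_insert]
      split_ifs
      · rw [Finset.card_insert_of_notMem (by simp)]
      · rfl
    have hiter : ∀ n, iterArc q (f n (χ 1))
        ((List.range (p + 1)).map fun k => (r (k + 1), f n (χ (k + 2))))
        = iterStep q (iterArc q (f n (χ 1))
          ((List.range p).map fun k => (r (k + 1), f n (χ (k + 2)))))
          (r (p + 1), f n (χ (p + 2))) := by
      intro n
      simp [iterArc, List.range_succ]
    have hmul : (p + 1 + 1) * q = (p + 1) * q + q := Nat.succ_mul _ _
    have hA : r (p + 1) ≤ q * k := by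
      rcases Nat.eq_zero_or_pos p with rfl | hp0
      · have := hr.1.1.1 1 le_rfl (by omega)
        simp at hk
        simp only [Nat.zero_add]
        omega
      · have := hr.1.1.2 (p + 1) (by omega) hp
        simp only [Nat.add_sub_cancel] at this
        omega
    have hD := hr.2 (p + 1) (by omega) hp
    rcases hD with h0 | hh | hf
    · refine ⟨k + 1, c, Function.update g k (fun n => f n (χ (p + 2))), ?_, ?_, ?_, ?_⟩
      · rw [hsum, h0, Nat.mul_succ, hmul]; omega
      · intro n
        rw [hiter, h0]
        have := isBlk_zero q k (c n) _ _ (hblk n) (f n (χ (p + 2)))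
        convert this using 1
        funext i
        by_cases hi : i = k
        · subst hi; simp
        · simp [Function.update_of_ne hi]
      · rw [hcard, if_neg (by omega)]; exact hcl
      · intro i
        by_cases hi : i = k
        · subst hi
          refine ⟨χ (p + 2), ?_⟩
          rw [Function.update_self]
          exact ⟨fun n => hmem n _, by simp [L2norm]⟩
        · rw [Function.update_of_ne hi]; exact hgood i
    · obtain ⟨k, rfl⟩ : ∃ k', k = k' + 1 := by
        rcases k with _ | k
        · simp at hA; omega
        · exact ⟨k, rfl⟩
      refine ⟨k + 1, c, Function.update g k (fun n => contrHalf q (g k n) (f n (χ (p + 2)))),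
        ?_, ?_, ?_, ?_⟩
      · rw [hsum, hh, hmul]; omega
      · intro n
        rw [hiter, hh]
        have := isBlk_half q k hqe (c n) _ _ (hblk n) (f n (χ (p + 2)))
        convert this using 1
        funext i
        by_cases hi : i = k
        · subst hi; simp
        · simp [Function.update_of_ne hi]
      · rw [hcard, if_neg (by omega)]; exact hcl
      · intro i
        by_cases hi : i = k
        · subst hi
          obtain ⟨a, ha⟩ := hgood i
          refine ⟨χ (p + 2), ?_⟩
          rw [Function.update_self]
          exact good_half q hqe lam f hmem hinner hc (g i) a _ ha
        · rw [Function.update_of_ne hi]; exact hgood i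
    · obtain ⟨k, rfl⟩ : ∃ k', k = k' + 1 := by
        rcases k with _ | k
        · simp at hA; omega
        · exact ⟨k, rfl⟩
      obtain ⟨a, ha⟩ := hgood k
      refine ⟨k, fun n => c n * ∫ s in posOrthant q, g k n (fun i => s i.rev) * f n (χ (p + 2)) s,
        g, ?_, ?_, ?_, hgood⟩
      · rw [Nat.mul_succ] at hk
        rw [hsum, hf, hmul]; omega
      · intro n
        rw [hiter, hf]
        exact isBlk_full q k (c n) _ _ (hblk n) (f n (χ (p + 2)))
      · rw [hcard, if_pos hf, pow_succ]
        exact hcl.mul (good_full q lam f hmem hsym hinner (g k) a _ ha)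

/-- for tuples in `D_m`, the scalar iterated contraction converges to `λ^j`
where `j` is the number of entries equal to `q`. -/
theorem iterated_contraction_Dm_limit (q : ℕ) (hq2 : 2 ≤ q) (hqe : q % 2 = 0)
    (lam : ℝ) (hlam : 0 < lam)
    (f : ℕ → ℕ → (Fin q → ℝ) → ℂ)
    (hmem : ∀ n i, MeasureTheory.MemLp (f n i) 2 (μpos q))
    (hsym : ∀ n i, IsSymmFn q (f n i))
    (hinner : ∀ i j, Filter.Tendsto (fun n => L2inner q (f n i) (f n j)) Filter.atTop
      (nhds (lam : ℂ)))
    (hcontr : ∀ i j, Filter.Tendsto (fun n => L2norm q (fun t =>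
        reindex (show q + q - 2 * (q / 2) = q by omega)
          (arc q q (q / 2) (f n i) (f n j)) t - f n j t)) Filter.atTop (nhds 0))
    (m : ℕ) (hm : 2 ≤ m) (χ : ℕ → ℕ) (r : ℕ → ℕ) (hr : memD q m r) :
    Filter.Tendsto (fun n => scalarOf (iterArc q (f n (χ 1))
        ((List.range (m - 1)).map fun k => (r (k + 1), f n (χ (k + 2))))))
      Filter.atTop
      (nhds ((lam : ℂ) ^ (((Finset.Icc 1 (m - 1)).filter fun p => r p = q).card))) := by
  have hc : ∀ i j, Tendsto (fun n => L2norm q (fun t =>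
      contrHalf q (f n i) (f n j) t - f n j t)) atTop (𝓝 0) := by
    intro i j
    have := hcontr i j
    simp only [reindex_arc] at this
    exact this
  obtain ⟨k, c, g, hk, hblk, hcl, -⟩ := main_induction q hq2 hqe lam f hmem hsym hinner hc m χ r hr
    (m - 1) le_rfl
  have hB := hr.1.2
  have hm1 : m - 1 + 1 = m := by omega
  rw [hm1] at hk
  have hk0 : k = 0 := by
    have : q * k = 0 := by omega
    rcases Nat.mul_eq_zero.1 this with h | h
    · omega
    · exact h
  subst hk0
  refine hcl.congr fun n => ?_
  unfold scalarOf
  rw [(hblk n).2]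
  simp [blk]

end
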